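/- For every ε > 0 there exists r₀ such that for every integer r ≥ r₀ there exists n₀ such that for all n ≥ n₀, opt_weak,c,r(S_n) ≥ (1−ε)·(2^r/r)·n·log₂(n). -/

import Mathlib

/-- `GuessForce ok V m` means: in the mistake-bound game with weak (yes/no) reinforcement
where queries have type `Q`, guesses have type `A`, and `ok q g f` says that guess `g` is a
correct answer to query `q` when the hidden target is `f`, an (adaptive) adversary whose
answers must stay consistent with some member of the current version space `V` can force
every deterministic learner to be answered "no" at least `m` times.
At each step the adversary chooses a query `q` and, depending on the learner's guess `g`,
either answers "no" (`c g = true`, one more mistake, continuing from the consistent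
functions for which the guess is wrong) or answers "yes" (`c g = false`, continuing from the
consistent functions for which the guess is correct). -/
inductive GuessForce {α Q A : Type*} (ok : Q → A → α → Prop) : Set α → ℕ → Prop where
  | zero (V : Set α) : V.Nonempty → GuessForce ok V 0
  | step (V : Set α) (m : ℕ) (q : Q) (c : A → Bool)
      (hne : ∀ g : A, (if c g then {f ∈ V | ¬ ok q g f} else {f ∈ V | ok q g f}).Nonempty)
      (h : ∀ g : A, GuessForce ok (if c g then {f ∈ V | ¬ ok q g f} else {f ∈ V | ok q g f})
        (if c g then m else m + 1)) :
      GuessForce ok V (m + 1)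

/-- `opt_weak,c,r(F)`: the comparison model. In each round the adversary chooses `r` distinct
ordered pairs of distinct inputs, and the learner guesses, for each pair `(i,j)`, whether
`f i < f j`; weak reinforcement (told only whether all `r` guesses are correct). -/
noncomputable def optComp (n r : ℕ) (F : Set (Equiv.Perm (Fin n))) : ℕ :=
  sSup {m | GuessForce
    (fun (x : {x : Fin r → Fin n × Fin n // Function.Injective x ∧ ∀ k, (x k).1 ≠ (x k).2})
         (g : Fin r → Bool) f =>
      ∀ k, (g k = true ↔ f (x.1 k).1 < f (x.1 k).2)) F m}

section GuessForce

variable {α Q A : Type*} {ok : Q → A → α → Prop}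

theorem GuessForce.nonempty [Nonempty A] {V : Set α} {m : ℕ} (h : GuessForce ok V m) :
    V.Nonempty := by
  induction h with
  | zero V hV => exact hV
  | step V m q c hne h ih =>
    refine (hne (Classical.arbitrary A)).mono ?_
    split_ifs <;> exact fun f hf => hf.1

/-- A larger version space only helps the adversary. -/
theorem GuessForce.mono {V W : Set α} {m : ℕ} (h : GuessForce ok V m) (hVW : V ⊆ W) :
    GuessForce ok W m := by
  induction h generalizing W with
  | zero V hV => exact .zero W (hV.mono hVW)
  | step V m q c hne h ih =>
    have key : ∀ g, (if c g then {f ∈ V | ¬ ok q g f} else {f ∈ V | ok q g f}) ⊆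
        (if c g then {f ∈ W | ¬ ok q g f} else {f ∈ W | ok q g f}) := by
      intro g
      split_ifs
      · exact fun f hf => ⟨hVW hf.1, hf.2⟩
      · exact fun f hf => ⟨hVW hf.1, hf.2⟩
    exact .step W m q c (fun g => (hne g).mono (key g)) fun g => ih g (key g)

/-- A learner guessing according to a member of the version space loses that member with every
mistake, so the number of mistakes is less than the size of the version space. -/
theorem GuessForce.lt_ncard {V : Set α} {m : ℕ} (h : GuessForce ok V m)
    [Nonempty A] (hok : ∀ q f, ∃ g, ok q g f) (hV : V.Finite) : m < V.ncard := by
  induction h with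
  | zero V hne => exact (Set.ncard_pos hV).2 hne
  | step V m q c hne h ih =>
    obtain ⟨f, hf⟩ := (GuessForce.step V m q c hne h).nonempty
    obtain ⟨g, hg⟩ := hok q f
    have ihg := ih g
    cases hc : c g with
    | true =>
      simp only [hc, if_true] at ihg
      have h1 := ihg (hV.subset fun f hf => hf.1)
      have h2 : {f ∈ V | ¬ ok q g f}.ncard < V.ncard :=
        Set.ncard_lt_ncard ⟨fun f hf => hf.1, fun hsub => (hsub hf).2 hg⟩ hV
      omega
    | false =>
      simp only [hc, Bool.false_eq_true, if_false] at ihg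
      have h1 := ihg (hV.subset fun f hf => hf.1)
      have h2 : {f ∈ V | ok q g f}.ncard ≤ V.ncard := Set.ncard_le_ncard (fun f hf => hf.1) hV
      omega

/-- Repeating one query and always answering "no" forces a mistake for all but one of the guesses
that are still possible. -/
theorem GuessForce.add_of_repeat [DecidableEq A] {q : Q} {m : ℕ}
    (huniq : ∀ g g' f, ok q g f → ok q g' f → g = g') (s : ℕ) (S : Finset A) (V : Set α)
    (hS : s + 1 ≤ S.card) (h : ∀ g ∈ S, GuessForce ok {f ∈ V | ok q g f} m) :
    GuessForce ok V (m + s) := by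
  induction s generalizing S V with
  | zero =>
    obtain ⟨g, hg⟩ := Finset.card_pos.1 hS
    exact (h g hg).mono fun f hf => hf.1
  | succ s ih =>
    have : Nonempty A := (Finset.card_pos.1 (by omega : 0 < S.card)).to_type
    have key : ∀ g, GuessForce ok {f ∈ V | ¬ ok q g f} (m + s) := by
      intro g
      refine ih (S.erase g) _ ?_ ?_
      · have := Finset.pred_card_le_card_erase (s := S) (a := g)
        omega
      · intro g' hg'
        rw [Finset.mem_erase] at hg'
        exact (h g' hg'.2).mono fun f hf =>
          ⟨⟨hf.1, fun hgf => hg'.1 (huniq _ _ f hf.2 hgf)⟩, hf.2⟩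
    exact .step V (m + s) q (fun _ => true) (fun g => by simpa using (key g).nonempty)
      fun g => by simpa using key g

end GuessForce

/-- An injective key is realised by the order of the values of some permutation. -/
theorem exists_perm_lt_iff {n : ℕ} (key : Fin n → ℕ) (hkey : Function.Injective key) :
    ∃ f : Equiv.Perm (Fin n), ∀ u v, f u < f v ↔ key u < key v := by
  have hmono : StrictMono (key ∘ Tuple.sort key) :=
    (Tuple.monotone_sort key).strictMono_of_injective (hkey.comp (Tuple.sort key).injective)
  refine ⟨(Tuple.sort key).symm, fun u v => ?_⟩
  rw [← hmono.lt_iff_lt]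
  simp

/-- The comparison query type of `optComp`. -/
abbrev CompQuery (n r : ℕ) : Type :=
  {x : Fin r → Fin n × Fin n // Function.Injective x ∧ ∀ k, (x k).1 ≠ (x k).2}

/-- The guess `g` answers all comparisons of the query `x` correctly for the target `f`. -/
abbrev CompOk {n r : ℕ} (x : CompQuery n r) (g : Fin r → Bool) (f : Equiv.Perm (Fin n)) : Prop :=
  ∀ k, (g k = true ↔ f (x.1 k).1 < f (x.1 k).2)

theorem compOk_unique {n r : ℕ} {x : CompQuery n r} (g g' : Fin r → Bool)
    (f : Equiv.Perm (Fin n)) (h : CompOk x g f) (h' : CompOk x g' f) : g = g' :=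
  funext fun k => Bool.eq_iff_iff.2 ((h k).trans (h' k).symm)

theorem le_optComp {n r m : ℕ} (F : Set (Equiv.Perm (Fin n)))
    (h : GuessForce (CompOk (n := n) (r := r)) F m) : m ≤ optComp n r F := by
  refine le_csSup ⟨F.ncard, fun m' hm' => (hm'.lt_ncard ?_ F.toFinite).le⟩ h
  exact fun x f => ⟨fun k => decide (f (x.1 k).1 < f (x.1 k).2), fun k => by simp⟩

/-- The permutations that insert the elements `el i k` among the pivots at ranks lying in
`[lo i k, lo i k + 2 ^ t i)`. -/
def insertionBox {n M a r : ℕ} (piv : Fin M → Fin n) (el : Fin a → Fin r → Fin n)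
    (lo : Fin a → Fin r → ℕ) (t : Fin a → ℕ) : Set (Equiv.Perm (Fin n)) :=
  {f | ∃ y : Fin a → Fin r → ℕ, (∀ i k, lo i k ≤ y i k ∧ y i k < lo i k + 2 ^ t i) ∧
    ∀ j i k, f (piv j) < f (el i k) ↔ (j : ℕ) ≤ y i k}

/-- Simultaneous binary insertion of groups of `r` elements forces `2 ^ r - 1` mistakes for
every halving of the rank intervals of one group. -/
theorem guessForce_insertionBox {n M a r : ℕ} (piv : Fin M → Fin n) (el : Fin a → Fin r → Fin n)
    (hinj : ∀ i, Function.Injective (el i)) (hne : ∀ j i k, piv j ≠ el i k)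
    (hreal : ∀ y : Fin a → Fin r → ℕ, (∀ i k, y i k < M) →
      ∃ f : Equiv.Perm (Fin n), ∀ j i k, f (piv j) < f (el i k) ↔ (j : ℕ) ≤ y i k)
    (T : ℕ) (t : Fin a → ℕ) (hT : ∑ i, t i = T) (lo : Fin a → Fin r → ℕ)
    (hlo : ∀ i k, lo i k + 2 ^ t i ≤ M) :
    GuessForce (CompOk (n := n) (r := r)) (insertionBox piv el lo t) (T * (2 ^ r - 1)) := by
  induction T generalizing t lo with
  | zero =>
    rw [zero_mul]
    have hlt : ∀ i k, lo i k < lo i k + 2 ^ t i := fun i k => by simp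
    obtain ⟨f, hf⟩ := hreal lo fun i k => (hlt i k).trans_le (hlo i k)
    exact .zero _ ⟨f, lo, fun i k => ⟨le_rfl, hlt i k⟩, hf⟩
  | succ T ih =>
    obtain ⟨i, hi⟩ : ∃ i, t i ≠ 0 := by
      by_contra! h
      simp [h] at hT
    obtain ⟨s, hs⟩ := Nat.exists_eq_succ_of_ne_zero hi
    have hpow : 2 ^ t i = 2 ^ s + 2 ^ s := by rw [hs, Nat.succ_eq_add_one]; ring
    have hpos : 0 < 2 ^ s := by positivity
    have hmid : ∀ k, lo i k + 2 ^ s < M := fun k => by have := hlo i k; omega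
    let q : CompQuery n r := ⟨fun k => (piv ⟨_, hmid k⟩, el i k),
      fun k k' h => hinj i (Prod.ext_iff.1 h).2, fun k => hne _ i k⟩
    rw [add_mul, one_mul]
    refine GuessForce.add_of_repeat (q := q) compOk_unique _ Finset.univ _ ?_ fun g _ => ?_
    · have := Nat.one_le_two_pow (n := r)
      simp only [Finset.card_univ, Fintype.card_fun, Fintype.card_bool, Fintype.card_fin]
      omega
    let t' : Fin a → ℕ := Function.update t i s
    let lo' : Fin a → Fin r → ℕ :=
      Function.update lo i fun k => lo i k + if g k then 2 ^ s else 0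
    have hT' : ∑ i, t' i = T := by
      have h1 := Finset.add_sum_erase Finset.univ t (Finset.mem_univ i)
      have h2 := Finset.add_sum_erase Finset.univ t' (Finset.mem_univ i)
      have h3 : ∑ j ∈ Finset.univ.erase i, t' j = ∑ j ∈ Finset.univ.erase i, t j :=
        Finset.sum_congr rfl fun j hj => Function.update_of_ne (Finset.ne_of_mem_erase hj) _ _
      have h4 : t' i = s := Function.update_self ..
      omega
    have hsub : ∀ i' k, lo i' k ≤ lo' i' k ∧ lo' i' k + 2 ^ t' i' ≤ lo i' k + 2 ^ t i' := by
      intro i' k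
      by_cases h : i' = i
      · subst h
        simp only [lo', t', Function.update_self, hpow]
        split_ifs <;> omega
      · simp [lo', t', Function.update_of_ne h]
    refine (ih t' hT' lo' fun i' k => (hsub i' k).2.trans (hlo i' k)).mono ?_
    rintro f ⟨y, hy, hf⟩
    refine ⟨⟨y, fun i' k => ?_, hf⟩, fun k => ?_⟩
    · have h1 := hsub i' k
      have h2 := hy i' k
      omega
    · have h := hy i k
      simp only [lo', t', Function.update_self] at h
      rw [hf]
      cases hg : g k <;> simp only [hg, if_true, Bool.false_eq_true, if_false] at h ⊢ <;>
        simp only [false_iff, true_iff] <;> omega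

theorem mul_le_optComp {n r K a : ℕ} (h : 2 ^ K + a * r ≤ n) :
    a * K * (2 ^ r - 1) ≤ optComp n r Set.univ := by
  have hel : ∀ (i : Fin a) (k : Fin r), 2 ^ K + (i * r + k) < n := by
    intro i k
    have h1 : (i + 1) * r ≤ a * r := Nat.mul_le_mul_right r i.2
    have h2 := k.2
    rw [add_mul, one_mul] at h1
    omega
  let piv : Fin (2 ^ K) → Fin n := Fin.castLE (by omega)
  let el : Fin a → Fin r → Fin n := fun i k => ⟨2 ^ K + (i * r + k), hel i k⟩
  have helinj : ∀ i k i' k', el i k = el i' k' → i = i' ∧ k = k' := by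
    intro i k i' k' heq
    have h0 : (i : ℕ) * r + k = i' * r + k' := by
      have := congrArg Fin.val heq
      simp only [el] at this
      omega
    have hr : 0 < r := k.pos
    have hk : (k : ℕ) = k' := by
      have := congrArg (· % r) h0
      simpa [Nat.mod_eq_of_lt, Nat.add_mod] using this
    refine ⟨Fin.ext (Nat.eq_of_mul_eq_mul_right hr (by omega)), Fin.ext hk⟩
  have hreal : ∀ y : Fin a → Fin r → ℕ, (∀ i k, y i k < 2 ^ K) →
      ∃ f : Equiv.Perm (Fin n), ∀ j i k, f (piv j) < f (el i k) ↔ (j : ℕ) ≤ y i k := by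
    intro y _
    obtain ⟨z, hz⟩ : ∃ z : Fin n → ℕ, (∀ j, z (piv j) = j) ∧ ∀ i k, z (el i k) = y i k := by
      refine ⟨fun u => if u.1 < 2 ^ K then u.1 else
        Function.extend (fun p : Fin a × Fin r => el p.1 p.2) (fun p => y p.1 p.2) (fun _ => 0) u,
        fun j => ?_, fun i k => ?_⟩
      · simp [piv]
      · have hnot : ¬ (el i k).1 < 2 ^ K := by simp [el]
        have hinj : Function.Injective fun p : Fin a × Fin r => el p.1 p.2 := fun p p' hp =>
          Prod.ext (helinj _ _ _ _ hp).1 (helinj _ _ _ _ hp).2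
        simp only [hnot, if_false]
        exact hinj.extend_apply (fun p => y p.1 p.2) (fun _ => 0) (i, k)
    have hkey : ∀ u v : Fin n, z u * n + u < z v * n + v ↔ z u < z v ∨ z u = z v ∧ u < v := by
      intro u v
      have hu := u.2
      have hv := v.2
      rcases lt_trichotomy (z u) (z v) with hlt | heq | hgt
      · have : (z u + 1) * n ≤ z v * n := Nat.mul_le_mul_right n hlt
        rw [add_mul, one_mul] at this
        simp only [hlt, true_or, iff_true]
        omega
      · simp [heq]
      · have : (z v + 1) * n ≤ z u * n := Nat.mul_le_mul_right n hgt
        rw [add_mul, one_mul] at this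
        simp only [hgt.not_gt, hgt.ne', false_and, or_false, iff_false]
        omega
    obtain ⟨f, hf⟩ := exists_perm_lt_iff (fun u : Fin n => z u * n + u) fun u v huv => by
      have h1 := (hkey u v).not.1 (by simpa using huv.ge)
      have h2 := (hkey v u).not.1 (by simpa using huv.le)
      push Not at h1 h2
      have h3 : z u = z v := le_antisymm h2.1 h1.1
      exact le_antisymm (h2.2 h3.symm) (h1.2 h3)
    refine ⟨f, fun j i k => ?_⟩
    have hlt : piv j < el i k := by
      have := j.2
      simp only [piv, el, Fin.lt_def, Fin.val_castLE]
      omega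
    rw [hf, hkey, hz.1, hz.2, le_iff_lt_or_eq]
    simp [hlt]
  have hgf := guessForce_insertionBox piv el (fun i k k' hk => (helinj _ _ _ _ hk).2)
    (fun j i k heq => by
      have h1 := congrArg Fin.val heq
      have h2 := j.2
      simp only [piv, el, Fin.val_castLE] at h1
      omega)
    hreal (a * K) (fun _ => K) (by simp) (fun _ _ => 0) (by simp)
  exact le_optComp _ (hgf.mono (Set.subset_univ _))

/-- For every `ε > 0` there exists `r₀` such that for every integer
`r ≥ r₀` there exists `n₀` such that for all `n ≥ n₀`,
`opt_weak,c,r(S_n) ≥ (1−ε)·(2^r/r)·n·log₂(n)`. -/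
theorem stmt16 (ε : ℝ) (hε : 0 < ε) :
    ∃ r₀ : ℕ, ∀ r : ℕ, r₀ ≤ r → ∃ n₀ : ℕ, ∀ n : ℕ, n₀ ≤ n →
      (1 - ε) * ((2 : ℝ) ^ r / r) * n * Real.logb 2 n
        ≤ (optComp n r (Set.univ : Set (Equiv.Perm (Fin n))) : ℝ) := by
  obtain ⟨d, hd0, hd1, hdε⟩ : ∃ d : ℝ, 0 < d ∧ d ≤ 1 / 4 ∧ 1 - ε ≤ 1 - 4 * d :=
    ⟨min ε 1 / 4, by positivity, by linarith [min_le_right ε 1], by linarith [min_le_left ε 1]⟩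
  obtain ⟨c, hc⟩ := pow_unbounded_of_one_lt (1 / d) (one_lt_two (α := ℝ))
  refine ⟨c + 1, fun r hr => ?_⟩
  have hR : 1 / d ≤ (2 : ℝ) ^ r :=
    hc.le.trans (pow_le_pow_right₀ one_le_two (by omega))
  have hRd : 1 ≤ d * (2 : ℝ) ^ r := by rwa [div_le_iff₀' hd0] at hR
  have hlog : Filter.Tendsto (fun n : ℕ => d * Real.logb 2 n) Filter.atTop Filter.atTop :=
    ((Real.tendsto_logb_atTop one_lt_two).comp tendsto_natCast_atTop_atTop).const_mul_atTop hd0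
  have hlin : Filter.Tendsto (fun n : ℕ => d * (n : ℝ)) Filter.atTop Filter.atTop :=
    tendsto_natCast_atTop_atTop.const_mul_atTop hd0
  obtain ⟨n₀, hn₀⟩ := Filter.eventually_atTop.1
    (((hlog.eventually_ge_atTop (1 + r : ℝ)).and (hlin.eventually_ge_atTop (r : ℝ))).and
      (Filter.eventually_ge_atTop (2 ^ r)))
  refine ⟨n₀, fun n hn => ?_⟩
  obtain ⟨⟨hL, hN⟩, hnr⟩ := hn₀ n hn
  have hn0 : n ≠ 0 := (Nat.two_pow_pos r |>.trans_le hnr).ne'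
  have hr0 : 0 < r := by omega
  have hlogr : r ≤ Nat.log 2 n := Nat.le_log_of_pow_le one_lt_two hnr
  obtain ⟨K, hK⟩ := Nat.exists_eq_add_of_le' hlogr
  have hM : 2 ^ K * 2 ^ r ≤ n := by
    rw [← pow_add, ← hK]
    exact Nat.pow_log_le_self 2 hn0
  have hMn : 2 ^ K ≤ n := (Nat.le_mul_of_pos_right _ (by positivity)).trans hM
  set a := (n - 2 ^ K) / r with ha
  have har : a * r ≤ n - 2 ^ K := Nat.div_mul_le_self _ _
  have har' : n - 2 ^ K < (a + 1) * r := by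
    rw [mul_comm]
    exact Nat.lt_mul_div_succ _ hr0
  have hopt := mul_le_optComp (n := n) (r := r) (K := K) (a := a) (by omega)
  have hR1 : 1 ≤ 2 ^ r := Nat.one_le_two_pow
  have hoptR : (a : ℝ) * K * (2 ^ r - 1) ≤ optComp n r (Set.univ : Set (Equiv.Perm (Fin n))) := by
    have := (Nat.cast_le (α := ℝ)).2 hopt
    push_cast [Nat.cast_sub hR1] at this
    exact this
  refine le_trans ?_ hoptR
  have hKL : (1 - d) * Real.logb 2 n ≤ K := by
    have h1 : Real.logb 2 n < Nat.log 2 n + 1 := by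
      rw [Real.logb_lt_iff_lt_rpow one_lt_two (by positivity)]
      exact_mod_cast Nat.lt_pow_succ_log_self one_lt_two n
    rw [hK] at h1
    push_cast at h1
    linarith
  have hL0 : 0 ≤ Real.logb 2 n := by
    by_contra! h
    have : (0 : ℝ) ≤ r := by positivity
    nlinarith
  have hrR : (0 : ℝ) < r := by exact_mod_cast hr0
  have hMd : (2 : ℝ) ^ K ≤ d * n := by
    have h1 : (2 : ℝ) ^ K * 2 ^ r ≤ n := by exact_mod_cast hM
    have h2 : (2 : ℝ) ^ K * 1 ≤ 2 ^ K * (d * 2 ^ r) := by gcongr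
    nlinarith
  have hrn : (1 - 2 * d) * n ≤ r * a := by
    have h1 : (n : ℝ) < (a + 1) * r + 2 ^ K := by
      exact_mod_cast (show n < (a + 1) * r + 2 ^ K by omega)
    linarith
  have hRR : (1 - d) * 2 ^ r ≤ (2 : ℝ) ^ r - 1 := by linarith
  have hd2 : 1 - 4 * d ≤ (1 - 2 * d) * (1 - d) * (1 - d) := by nlinarith [sq_nonneg d]
  calc (1 - ε) * ((2 : ℝ) ^ r / r) * n * Real.logb 2 n
      ≤ ((1 - 2 * d) * (1 - d) * (1 - d)) * ((2 : ℝ) ^ r / r) * n * Real.logb 2 n := by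
        gcongr
        exact hdε.trans hd2
    _ = ((1 - 2 * d) * n) * ((1 - d) * Real.logb 2 n) * ((1 - d) * 2 ^ r) / r := by ring
    _ ≤ (r * a) * K * (2 ^ r - 1) / r := by
        have h1 : 0 ≤ 1 - d := by linarith
        gcongr
    _ = a * K * (2 ^ r - 1) := by field_simp
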